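/- Let P be an Artin-Tits monoid generated by atom set A and F ⊆ A a subset. Then the submonoid P_F generated by F is canonically isomorphic to the Artin-Tits monoid on F with the restricted Coxeter matrix, and for p, q ∈ P_F, if pP ∩ qP ≠ ∅ in P then pP_F ∩ qP_F ≠ ∅ in P_F, with least common multiples of elements of P_F computed in P_F agreeing with those computed in P. -/

import Mathlib

/-- The alternating word `abab⋯` of length `n` in the free monoid on `A`. -/
def altWord {A : Type*} (a b : A) (n : ℕ) : FreeMonoid A :=
  FreeMonoid.ofList ((List.range n).map fun i => if i % 2 = 0 then a else b)

/-- The defining Artin–Tits relations for the Coxeter matrix `M` (no relation for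
`M a b = ∞`). -/
def artinRel {A : Type*} (M : A → A → ℕ∞) : FreeMonoid A → FreeMonoid A → Prop :=
  fun x y => ∃ (a b : A) (n : ℕ), a ≠ b ∧ M a b = (n : ℕ∞) ∧
    x = altWord a b n ∧ y = altWord b a n

/-- The congruence on the free monoid generated by the Artin–Tits relations. -/
def artinCon {A : Type*} (M : A → A → ℕ∞) : Con (FreeMonoid A) := conGen (artinRel M)

/-- The Artin–Tits monoid `P = ⟨A | (ab)^{[m_{a,b}]} = (ba)^{[m_{b,a}]}⟩⁺`. -/
abbrev ArtinTits {A : Type*} (M : A → A → ℕ∞) := (artinCon M).Quotient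

/-- The canonical image of an atom `a ∈ A` in the Artin–Tits monoid. -/
def atGen {A : Type*} (M : A → A → ℕ∞) (a : A) : ArtinTits M :=
  (artinCon M).mk' (FreeMonoid.of a)

/-- The parabolic submonoid `P_F = ⟨F⟩⁺ ⊆ P`. -/
def atParab {A : Type*} (M : A → A → ℕ∞) (F : Set A) : Submonoid (ArtinTits M) :=
  Submonoid.closure ((fun a => atGen M a) '' F)

/-- `c` is a least common multiple (for left divisibility) of `p` and `q`, with all
divisibility witnesses taken in the submonoid `N`. -/
def IsLcmIn {A : Type*} (M : A → A → ℕ∞) (N : Submonoid (ArtinTits M))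
    (p q c : ArtinTits M) : Prop :=
  (∃ r ∈ N, p * r = c) ∧ (∃ r ∈ N, q * r = c) ∧
    ∀ d : ArtinTits M, (∃ r ∈ N, p * r = d) → (∃ r ∈ N, q * r = d) → ∃ r ∈ N, c * r = d


namespace ATProof
noncomputable section

/-- Alternating product `x y x ⋯` with `n` factors. -/
def alt {G : Type*} [Monoid G] (x y : G) : ℕ → G
  | 0 => 1
  | n + 1 => x * alt y x n

theorem alt_map {G H : Type*} [Monoid G] [Monoid H] (f : G →* H) (x y : G) (n : ℕ) :
    f (alt x y n) = alt (f x) (f y) n := by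
  induction n generalizing x y with
  | zero => simp [alt]
  | succ n ih => simp [alt, ih]

theorem alt_succ' {G : Type*} [Monoid G] (x y : G) (n : ℕ) :
    alt x y (n + 1) = alt x y n * (if Even n then x else y) := by
  induction n generalizing x y with
  | zero => simp [alt]
  | succ n ih =>
    rw [alt, ih, alt, mul_assoc]
    congr 2
    by_cases h : Even n <;> simp [h, Nat.even_add_one]

theorem alt_add {G : Type*} [Monoid G] (x y : G) (i j : ℕ) :
    alt x y (i + j) = alt x y i * (if Even i then alt x y j else alt y x j) := by
  induction i generalizing x y with
  | zero => simp [alt]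
  | succ n ih =>
    rw [show n + 1 + j = (n + j) + 1 by omega, alt, ih, alt, mul_assoc]
    congr 2
    by_cases h : Even n <;> simp [h, Nat.even_add_one]

theorem alt_inv {G : Type*} [Group G] (x y : G) (hx : x⁻¹ = x) (hy : y⁻¹ = y) (n : ℕ) :
    (alt x y n)⁻¹ = if Even n then alt y x n else alt x y n := by
  induction n with
  | zero => simp [alt]
  | succ n ih =>
    have h1 : (alt x y (n + 1))⁻¹ = (if Even n then x else y) * (alt x y n)⁻¹ := by
      rw [alt_succ', mul_inv_rev]
      by_cases h : Even n <;> simp [h, hx, hy]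
    rw [h1, ih]
    by_cases h : Even n <;> simp [h, Nat.even_add_one, alt]

theorem alt_two_mul {G : Type*} [Monoid G] (x y : G) (n : ℕ) :
    alt x y (2 * n) = (x * y) ^ n := by
  induction n with
  | zero => simp [alt]
  | succ n ih =>
    rw [show 2 * (n + 1) = 2 * n + 1 + 1 by ring, alt, alt, ih, pow_succ', mul_assoc]

theorem alt_comm {G : Type*} [Group G] (x y : G) (hx : x⁻¹ = x) (hy : y⁻¹ = y) (n : ℕ)
    (h : (x * y) ^ n = 1) : alt x y n = alt y x n := by
  have h1 : alt x y n * (if Even n then alt x y n else alt y x n) = 1 := by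
    rw [← alt_add, ← two_mul, alt_two_mul, h]
  have h2 := alt_inv y x hy hx n
  rw [← h2] at h1
  exact mul_inv_eq_one.mp h1

/-! ### The reflection representation -/

variable {A : Type*} (C : CoxeterMatrix A)

open Real

/-- `cos (π / m)`, with `1` for `m = ∞` (encoded as `0`). -/
def cc (m : ℕ) : ℝ := cos (π / m)

open Classical in
def bil (a b : A) : ℝ := -2 * cc (C a b)

theorem bil_self (a : A) : bil C a a = 2 := by simp [bil, cc]

theorem bil_symm (a b : A) : bil C a b = bil C b a := by
  simp [bil, C.symmetric a b]

def root (a : A) : A →₀ ℝ := Finsupp.single a 1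

def coroot (a : A) : Module.Dual ℝ (A →₀ ℝ) := Finsupp.linearCombination ℝ (bil C a)

@[simp] theorem coroot_root (a b : A) : coroot C a (root b) = bil C a b := by
  simp [coroot, root]

theorem coroot_self (a : A) : coroot C a (root a) = 2 := by
  rw [coroot_root, bil_self]

def refl (a : A) : (A →₀ ℝ) ≃ₗ[ℝ] (A →₀ ℝ) := Module.reflection (coroot_self C a)

theorem refl_apply (a : A) (x : A →₀ ℝ) : refl C a x = x - coroot C a x • root a :=
  Module.reflection_apply _ _

open Polynomial.Chebyshev in
theorem liftable : C.IsLiftable (refl C) := by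
  intro a b
  by_cases hab : a = b
  · subst hab
    ext1 x
    have := Module.involutive_reflection (coroot_self C a) x
    simpa [refl] using this
  rcases Nat.eq_zero_or_pos (C a b) with h0 | hpos
  · rw [h0, pow_zero]
  have h1 : C a b ≠ 1 := C.off_diagonal a b hab
  have hsm := bil_symm C b a
  have hbil : bil C a b = -2 * cos (π / (C a b : ℕ)) := rfl
  ext1 z
  generalize hm : C a b = m at *
  rcases eq_or_ne m 2 with h2 | h2
  · subst h2
    have : bil C a b = 0 := by simp [hbil]
    rw [pow_two]
    simp only [LinearEquiv.mul_apply, refl_apply, map_sub, map_smul, coroot_root, this, hsm, bil_self]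
    simp
    module
  have hm3 : (3 : ℝ) ≤ m := by exact_mod_cast (by omega : 3 ≤ m)
  set θ := π / m with hθ
  have hmθ : m * θ = π := by rw [hθ]; field_simp
  have hpi := Real.pi_pos
  have hθ0 : 0 < θ := by positivity
  have hs : sin (2 * θ) ≠ 0 := by
    apply ne_of_gt
    apply sin_pos_of_pos_of_lt_pi <;> nlinarith
  have ht : 2 * cos (2 * θ) = coroot C a (root b) * coroot C b (root a) - 2 := by
    rw [coroot_root, coroot_root, hsm, hbil, cos_two_mul]; ring
  have key := Module.reflection_mul_reflection_pow_apply (coroot_self C a) (coroot_self C b) m z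
    (2 * cos (2 * θ)) ht
  have hS := fun n : ℤ => S_two_mul_real_cos (2 * θ) n
  change ((refl C a * refl C b) ^ m) z = z
  have key' : ((refl C a * refl C b) ^ m) z = _ := key
  rw [key']
  obtain ⟨j, hj | hj⟩ := Nat.even_or_odd' m
  · have e1 : ((m : ℤ) - 2) / 2 = j - 1 := by omega
    have e2 : ((m : ℤ) - 1) / 2 = j - 1 := by omega
    have hz : (S ℝ (j - 1)).eval (2 * cos (2 * θ)) = 0 := by
      have := hS (j - 1)
      have h3 : ((((j : ℤ) - 1 : ℤ) : ℝ) + 1) * (2 * θ) = π := by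
        rw [← hmθ, hj]; push_cast; ring
      rw [h3, sin_pi] at this
      exact (mul_eq_zero.mp this).resolve_right hs
    rw [e1, e2, hz]; simp
  · have e1 : ((m : ℤ) - 2) / 2 = j - 1 := by omega
    have e2 : ((m : ℤ) - 1) / 2 = j := by omega
    have e3 : ((m : ℤ) - 3) / 2 = j - 1 := by omega
    have e4 : (m : ℤ) / 2 = j := by omega
    have hz : (S ℝ j).eval (2 * cos (2 * θ)) + (S ℝ (j - 1)).eval (2 * cos (2 * θ)) = 0 := by
      have h3 := hS (j - 1)
      have h4 := hS j
      have h5 : (((j : ℤ) : ℝ) + 1) * (2 * θ) = π + θ := by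
        rw [← hmθ, hj]; push_cast; ring
      have h6 : ((((j : ℤ) - 1 : ℤ) : ℝ) + 1) * (2 * θ) = π - θ := by
        rw [← hmθ, hj]; push_cast; ring
      rw [h5] at h4
      rw [h6] at h3
      have : ((S ℝ j).eval (2 * cos (2 * θ)) + (S ℝ (j - 1)).eval (2 * cos (2 * θ))) * sin (2 * θ) = 0 := by
        rw [add_mul, h3, h4, sin_pi_sub, add_comm π θ, sin_add_pi]; ring
      exact (mul_eq_zero.mp this).resolve_right hs
    rw [e1, e2, e3, e4, hz]; simp

/-- Values `sin (k θ) / sin θ` through their recursion. -/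
def sq (c : ℝ) : ℕ → ℝ
  | 0 => 0
  | 1 => 1
  | k + 2 => 2 * c * sq c (k + 1) - sq c k

theorem sq_sin (θ : ℝ) (k : ℕ) : sq (cos θ) k * sin θ = sin (k * θ) := by
  induction k using Nat.twoStepInduction with
  | zero => simp [sq]
  | one => simp [sq]
  | more k h1 h2 =>
    rw [sq, sub_mul, mul_assoc, h1, h2]
    push_cast
    have e1 : ((k : ℝ) + 2) * θ = (k + 1) * θ + θ := by ring
    have e2 : (k : ℝ) * θ = (k + 1) * θ - θ := by ring
    rw [e1, e2, sin_add, sin_sub]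
    ring

theorem sq_one (k : ℕ) : sq 1 k = k := by
  induction k using Nat.twoStepInduction with
  | zero => simp [sq]
  | one => simp [sq]
  | more k h1 h2 => rw [sq, h1, h2]; push_cast; ring

theorem sq_nonneg' (m k : ℕ) (hm : m ≠ 1) (h : m = 0 ∨ k ≤ m) : 0 ≤ sq (cc m) k := by
  rcases Nat.eq_zero_or_pos m with h0 | hpos
  · subst h0; simp [cc, sq_one]
  have hk : k ≤ m := by omega
  have hm2 : (2 : ℝ) ≤ m := by exact_mod_cast (by omega : 2 ≤ m)
  have hk' : (k : ℝ) ≤ m := by exact_mod_cast hk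
  have hpi := Real.pi_pos
  have hmθ : m * (π / m) = π := by field_simp
  have hθ0 : 0 < π / m := by positivity
  have hs : 0 < sin (π / m) := by
    apply sin_pos_of_pos_of_lt_pi hθ0; nlinarith
  have h1 := sq_sin (π / m) k
  have h2 : 0 ≤ sin (k * (π / m)) := by
    apply sin_nonneg_of_nonneg_of_le_pi
    · positivity
    · nlinarith
  rw [← h1] at h2
  exact nonneg_of_mul_nonneg_left h2 hs

/-! ### Lengths in the Coxeter group -/

variable {C} {W : Type*} [Group W] (cs : CoxeterSystem C W)

def rep : W →* ((A →₀ ℝ) ≃ₗ[ℝ] (A →₀ ℝ)) := cs.lift ⟨refl C, liftable C⟩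

theorem rep_simple (a : A) : rep cs (cs.simple a) = refl C a :=
  cs.lift_apply_simple (liftable C) a

theorem dih (a b : A) (k : ℕ) :
    rep cs (alt (cs.simple b) (cs.simple a) k)⁻¹ (root a) =
      if Even k then sq (cc (C a b)) (k + 1) • root a + sq (cc (C a b)) k • root b
      else sq (cc (C a b)) k • root a + sq (cc (C a b)) (k + 1) • root b := by
  induction k with
  | zero => simp [alt, sq]
  | succ k ih =>
    have hs := bil_symm C b a
    rw [alt_succ', mul_inv_rev, map_mul, LinearEquiv.mul_apply, ih]
    by_cases h : Even k
    · simp only [h, Nat.even_add_one, if_true, not_true, if_false, cs.inv_simple, rep_simple,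
        refl_apply, map_add, map_smul, coroot_root, bil_self, hs, sq]
      simp only [bil]
      module
    · simp only [h, Nat.even_add_one, if_true, if_false, not_false_eq_true, cs.inv_simple,
        rep_simple, refl_apply, map_add, map_smul, coroot_root, bil_self, sq]
      simp only [bil]
      module

theorem smul_nonneg_fs {r : ℝ} {x : A →₀ ℝ} (hr : 0 ≤ r) (hx : 0 ≤ x) : 0 ≤ r • x := by
  intro i
  have := hx i
  simp only [Finsupp.coe_zero, Pi.zero_apply] at this
  simpa using mul_nonneg hr this

theorem add_nonneg_fs {x y : A →₀ ℝ} (hx : 0 ≤ x) (hy : 0 ≤ y) : 0 ≤ x + y := by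
  intro i
  have h1 := hx i
  have h2 := hy i
  simp only [Finsupp.coe_zero, Pi.zero_apply] at h1 h2
  simpa using add_nonneg h1 h2

theorem dih_nonneg {a b : A} (hab : a ≠ b) (v : W) (k : ℕ) (hk : C a b = 0 ∨ k < C a b)
    (ha : 0 ≤ rep cs v⁻¹ (root a)) (hb : 0 ≤ rep cs v⁻¹ (root b)) :
    0 ≤ rep cs (alt (cs.simple b) (cs.simple a) k * v)⁻¹ (root a) := by
  rw [mul_inv_rev, map_mul, LinearEquiv.mul_apply, dih]
  have h1 := sq_nonneg' (C a b) k (C.off_diagonal a b hab) (by omega)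
  have h2 := sq_nonneg' (C a b) (k + 1) (C.off_diagonal a b hab) (by omega)
  split_ifs <;> rw [map_add, map_smul, map_smul] <;>
    exact add_nonneg_fs (smul_nonneg_fs (by assumption) ha) (smul_nonneg_fs (by assumption) hb)

theorem simple_alt_comm (a b : A) :
    alt (cs.simple a) (cs.simple b) (C a b) = alt (cs.simple b) (cs.simple a) (C a b) :=
  alt_comm _ _ (cs.inv_simple a) (cs.inv_simple b) _ (cs.simple_mul_simple_pow a b)

theorem length_alt_le (a b : A) (k : ℕ) : cs.length (alt (cs.simple a) (cs.simple b) k) ≤ k := by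
  induction k generalizing a b with
  | zero => simp [alt]
  | succ k ih =>
    rw [alt]
    have := cs.length_mul_le (cs.simple a) (alt (cs.simple b) (cs.simple a) k)
    have := ih b a
    rw [cs.length_simple] at *
    omega

theorem length_alt_mul_le (a b : A) (k : ℕ) (v : W) :
    cs.length (alt (cs.simple a) (cs.simple b) k * v) ≤ k + cs.length v := by
  have := cs.length_mul_le (alt (cs.simple a) (cs.simple b) k) v
  have := length_alt_le cs a b k
  omega

/-- auxiliary decomposition predicate -/
def Strip (a b : A) (w : W) : Prop :=
  ∃ (k : ℕ) (v : W), (w = alt (cs.simple a) (cs.simple b) k * v ∨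
    w = alt (cs.simple b) (cs.simple a) k * v) ∧ cs.length w = k + cs.length v ∧
    ¬ cs.IsLeftDescent v a ∧ ¬ cs.IsLeftDescent v b

theorem Strip.symm {a b : A} {w : W} (h : Strip cs a b w) : Strip cs b a w := by
  obtain ⟨k, v, h1, h2, h3, h4⟩ := h
  exact ⟨k, v, h1.symm, h2, h4, h3⟩

theorem strip_step {a b : A} {w : W} (hd : cs.IsLeftDescent w a)
    (h : Strip cs a b (cs.simple a * w)) : Strip cs a b w := by
  obtain ⟨k, v, h1, h2, h3, h4⟩ := h
  have hl := cs.isLeftDescent_iff.mp hd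
  have key : ∀ x, cs.simple a * w = x → w = cs.simple a * x := by
    intro x hx; rw [← hx, cs.simple_mul_simple_cancel_left]
  rcases h1 with h1 | h1
  · cases k with
    | zero =>
      refine ⟨1, v, Or.inl ?_, by omega, h3, h4⟩
      rw [key _ h1]; simp [alt]
    | succ k =>
      exfalso
      have h5 := key _ h1
      rw [alt, mul_assoc, cs.simple_mul_simple_cancel_left] at h5
      have := length_alt_mul_le cs b a k v
      rw [← h5] at this
      omega
  · refine ⟨k + 1, v, Or.inl ?_, by omega, h3, h4⟩
    rw [alt, mul_assoc]; exact key _ h1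

theorem strip (a b : A) (w : W) : Strip cs a b w := by
  induction hn : cs.length w using Nat.strong_induction_on generalizing w with
  | _ n ih =>
    by_cases ha : cs.IsLeftDescent w a
    · exact strip_step cs ha (ih _ (by subst hn; exact ha) _ rfl)
    by_cases hb : cs.IsLeftDescent w b
    · exact (strip_step cs hb (ih _ (by subst hn; exact hb) _ rfl).symm).symm
    exact ⟨0, w, by simp [alt], by simp, ha, hb⟩

theorem dichotomy (w : W) (a : A) (h : ¬ cs.IsLeftDescent w a) : 0 ≤ rep cs w⁻¹ (root a) := by
  induction hn : cs.length w using Nat.strong_induction_on generalizing w a with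
  | _ n ih =>
    by_cases hw : w = 1
    · subst hw
      intro i
      classical
      simp only [root, Finsupp.single_apply, inv_one, map_one, LinearEquiv.coe_one, id_eq,
        Finsupp.coe_zero, Pi.zero_apply]
      split_ifs <;> norm_num
    obtain ⟨b, hb⟩ := cs.exists_leftDescent_of_ne_one hw
    have hab : a ≠ b := by rintro rfl; exact h hb
    obtain ⟨k, v, h1, h2, h3, h4⟩ := strip cs a b w
    have hk : k ≠ 0 := by
      rintro rfl
      simp only [alt, one_mul, or_self] at h1
      rw [h1] at hb
      exact h4 hb
    have h1' : w = alt (cs.simple b) (cs.simple a) k * v := by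
      rcases h1 with h1 | h1
      · exfalso
        obtain ⟨j, rfl⟩ := Nat.exists_eq_succ_of_ne_zero hk
        apply h
        unfold CoxeterSystem.IsLeftDescent
        have := length_alt_mul_le cs b a j v
        rw [h2, h1, alt, mul_assoc, cs.simple_mul_simple_cancel_left]
        omega
      · exact h1
    have hlt : C a b = 0 ∨ k < C a b := by
      by_contra! hcon
      obtain ⟨c0, hle⟩ := hcon
      obtain ⟨j, rfl⟩ := Nat.exists_eq_add_of_le hle
      apply h
      unfold CoxeterSystem.IsLeftDescent
      rw [alt_add, ← simple_alt_comm, mul_assoc] at h1'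
      obtain ⟨m, hm⟩ := Nat.exists_eq_succ_of_ne_zero c0
      rw [hm] at h1' h2
      rw [h2, h1', alt, mul_assoc, cs.simple_mul_simple_cancel_left]
      have e1 := length_alt_mul_le cs b a m
        ((if Even (m + 1) then alt (cs.simple b) (cs.simple a) j
          else alt (cs.simple a) (cs.simple b) j) * v)
      have e2 := length_alt_mul_le cs b a j v
      have e3 := length_alt_mul_le cs a b j v
      simp only [Nat.succ_eq_add_one] at *
      split_ifs at * <;> omega
    rw [h1']
    exact dih_nonneg cs hab v k hlt (ih _ (by omega) v a h3 rfl) (ih _ (by omega) v b h4 rfl)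

theorem not_desc_of_nonneg (w : W) (a : A) (h : 0 ≤ rep cs w⁻¹ (root a)) :
    ¬ cs.IsLeftDescent w a := by
  intro hd
  have h1 := dichotomy cs (cs.simple a * w) a
    (cs.isLeftDescent_iff_not_isLeftDescent_mul.mp hd)
  rw [mul_inv_rev, map_mul, LinearEquiv.mul_apply, cs.inv_simple, rep_simple, refl_apply,
    coroot_root, bil_self, two_smul, sub_add_cancel_left, map_neg] at h1
  have h2 : rep cs w⁻¹ (root a) = 0 := by
    ext i
    have e1 := h i
    have e2 := h1 i
    simp only [Finsupp.coe_zero, Pi.zero_apply, Finsupp.coe_neg, Pi.neg_apply] at *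
    linarith
  have h3 : root a = 0 := (LinearEquiv.map_eq_zero_iff _).mp h2
  simp [root] at h3

theorem length_alt_mul {a b : A} (hab : a ≠ b) (v : W) (ha : ¬ cs.IsLeftDescent v a)
    (hb : ¬ cs.IsLeftDescent v b) (k : ℕ) (hk : C a b = 0 ∨ k ≤ C a b) :
    cs.length (alt (cs.simple a) (cs.simple b) k * v) = k + cs.length v := by
  induction k generalizing a b with
  | zero => simp [alt]
  | succ k ih =>
    have hs := C.symmetric a b
    have h1 := ih hab.symm hb ha (by omega)
    have h2 := not_desc_of_nonneg cs _ a (dih_nonneg cs hab v k (by omega)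
      (dichotomy cs v a ha) (dichotomy cs v b hb))
    rw [cs.not_isLeftDescent_iff] at h2
    rw [alt, mul_assoc, h2, h1]; omega

theorem two_desc {a b : A} (hab : a ≠ b) (w : W) (ha : cs.IsLeftDescent w a)
    (hb : cs.IsLeftDescent w b) :
    C a b ≠ 0 ∧ ∃ v, w = alt (cs.simple a) (cs.simple b) (C a b) * v ∧
      cs.length w = C a b + cs.length v := by
  have main : ∀ (a b : A), a ≠ b → cs.IsLeftDescent w a → cs.IsLeftDescent w b →
      ∀ k v, w = alt (cs.simple a) (cs.simple b) k * v → cs.length w = k + cs.length v →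
      ¬ cs.IsLeftDescent v a → ¬ cs.IsLeftDescent v b →
      C a b ≠ 0 ∧ ∃ v, w = alt (cs.simple a) (cs.simple b) (C a b) * v ∧
      cs.length w = C a b + cs.length v := by
    intro a b hab ha hb k v h1 h2 h3 h4
    have hs := C.symmetric a b
    have hlt : ¬ (C a b = 0 ∨ k < C a b) := by
      intro hlt
      have := length_alt_mul cs hab.symm v h4 h3 (k + 1) (by omega)
      rw [alt, mul_assoc, ← h1] at this
      have := cs.isLeftDescent_iff.mp hb
      omega
    push Not at hlt
    refine ⟨hlt.1, ?_⟩
    obtain ⟨j, rfl⟩ := Nat.exists_eq_add_of_le hlt.2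
    rw [alt_add, mul_assoc] at h1
    refine ⟨_, h1, ?_⟩
    have e1 := length_alt_mul_le cs a b (C a b) ((if Even (C a b)
      then alt (cs.simple a) (cs.simple b) j else alt (cs.simple b) (cs.simple a) j) * v)
    rw [← h1] at e1
    have e2 := length_alt_mul_le cs b a j v
    have e3 := length_alt_mul_le cs a b j v
    split_ifs at * <;> omega
  obtain ⟨k, v, h1 | h1, h2, h3, h4⟩ := strip cs a b w
  · exact main a b hab ha hb k v h1 h2 h3 h4
  · have := main b a hab.symm hb ha k v h1 h2 h4 h3
    rwa [← C.symmetric a b, ← simple_alt_comm] at this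

theorem two_ext {a b : A} (hab : a ≠ b) (u : W) (ha : ¬ cs.IsRightDescent u a)
    (hb : ¬ cs.IsRightDescent u b) :
    cs.length (u * alt (cs.simple a) (cs.simple b) (C a b)) = cs.length u + C a b := by
  rw [← cs.length_inv, mul_inv_rev, alt_inv _ _ (cs.inv_simple a) (cs.inv_simple b),
    ← simple_alt_comm, ite_self, length_alt_mul cs hab, cs.length_inv, add_comm]
  · rwa [cs.isLeftDescent_inv_iff]
  · rwa [cs.isLeftDescent_inv_iff]
  · right; rfl

/-! ### The Artin–Tits monoid -/

end

section Monoid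

variable {A : Type*} {M : A → A → ℕ∞}

theorem altWord_eq (a b : A) (n : ℕ) :
    altWord a b n = alt (FreeMonoid.of a) (FreeMonoid.of b) n := by
  induction n generalizing a b with
  | zero => rfl
  | succ n ih =>
    rw [alt, ← ih]
    simp only [altWord, List.range_succ_eq_map, List.map_cons, List.map_map]
    apply FreeMonoid.toList.injective
    simp only [FreeMonoid.toList_mul, FreeMonoid.toList_of, FreeMonoid.toList_ofList]
    simp only [Nat.zero_mod, if_true, List.cons_append, List.nil_append, List.cons.injEq, true_and]
    apply List.map_congr_left
    intro i _
    simp only [Function.comp]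
    rcases Nat.mod_two_eq_zero_or_one i with h | h
    · have : (i + 1) % 2 = 1 := by omega
      simp [h, this]
    · have : (i + 1) % 2 = 0 := by omega
      simp [h, this]

theorem mk_altWord (a b : A) (n : ℕ) :
    (artinCon M).mk' (altWord a b n) = alt (atGen M a) (atGen M b) n := by
  rw [altWord_eq, alt_map]; rfl

theorem braid {a b : A} {n : ℕ} (hab : a ≠ b) (h : M a b = n) :
    alt (atGen M a) (atGen M b) n = alt (atGen M b) (atGen M a) n := by
  rw [← mk_altWord, ← mk_altWord]
  exact (Con.eq _).mpr (ConGen.Rel.of _ _ ⟨a, b, n, hab, h, rfl, rfl⟩)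

/-- Universal property. -/
noncomputable def lift {G : Type*} [Monoid G] (f : A → G)
    (hf : ∀ a b (n : ℕ), a ≠ b → M a b = n → alt (f a) (f b) n = alt (f b) (f a) n) :
    ArtinTits M →* G :=
  (artinCon M).lift (FreeMonoid.lift f) (by
    refine Con.conGen_le.mpr ?_
    rintro x y ⟨a, b, n, hab, h, rfl, rfl⟩
    change FreeMonoid.lift f _ = FreeMonoid.lift f _
    rw [altWord_eq, altWord_eq, alt_map, alt_map]
    simpa using hf a b n hab h)

theorem lift_gen {G : Type*} [Monoid G] (f : A → G)
    (hf : ∀ a b (n : ℕ), a ≠ b → M a b = n → alt (f a) (f b) n = alt (f b) (f a) n) (a : A) :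
    lift f hf (atGen M a) = f a := by
  change FreeMonoid.lift f (FreeMonoid.of a) = f a
  simp

theorem mk_surj (p : ArtinTits M) : ∃ w, (artinCon M).mk' w = p := Con.mk'_surjective p

theorem exists_cons (p : ArtinTits M) : p = 1 ∨ ∃ a p', p = atGen M a * p' := by
  obtain ⟨w, rfl⟩ := mk_surj p
  induction w using FreeMonoid.casesOn with
  | one => left; simp
  | of_mul a l => right; exact ⟨a, (artinCon M).mk' l, by rw [map_mul]; rfl⟩

variable (M) in
/-- The degree homomorphism. -/
noncomputable def degHom : ArtinTits M →* Multiplicative ℕ :=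
  lift (fun _ => Multiplicative.ofAdd 1) (fun _ _ _ _ _ => rfl)

/-- The degree. -/
noncomputable def deg (p : ArtinTits M) : ℕ := (degHom M p).toAdd

@[simp] theorem deg_one : deg (1 : ArtinTits M) = 0 := by simp [deg]
@[simp] theorem deg_mul (p q : ArtinTits M) : deg (p * q) = deg p + deg q := by simp [deg]
@[simp] theorem deg_gen (a : A) : deg (atGen M a) = 1 := by
  simp [deg, degHom, lift_gen]
@[simp] theorem deg_alt (a b : A) (n : ℕ) : deg (alt (atGen M a) (atGen M b) n) = n := by
  induction n generalizing a b with
  | zero => simp [alt]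
  | succ n ih => simp [alt, ih]; omega

theorem gen_ind {p : ArtinTits M → Prop} (x : ArtinTits M) (h1 : p 1)
    (h : ∀ a x, p x → p (atGen M a * x)) : p x := by
  induction hn : deg x using Nat.strong_induction_on generalizing x with
  | _ n ih =>
    rcases exists_cons x with rfl | ⟨a, y, rfl⟩
    · exact h1
    · exact h a y (ih (deg y) (by simp at hn; omega) y rfl)

open Classical in
/-- The Coxeter matrix with `0` for infinity and ones on the diagonal. -/
noncomputable def cox (M : A → A → ℕ∞) (hsymm : ∀ a b : A, M a b = M b a)
    (hge : ∀ a b : A, a ≠ b → 2 ≤ M a b) : CoxeterMatrix A where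
  M := Matrix.of fun a b => if a = b then 1 else (M a b).toNat
  isSymm := by
    ext a b
    simp only [Matrix.transpose_apply, Matrix.of_apply, hsymm b a, eq_comm]
  diagonal := by simp
  off_diagonal := by
    intro a b hab
    simp only [Matrix.of_apply, hab, if_false]
    intro h
    have h2 := hge a b hab
    cases hM : M a b with
    | top => rw [hM] at h; simp at h
    | coe n =>
      rw [hM] at h h2
      simp at h
      subst h
      exact absurd h2 (by decide)

variable (hsymm : ∀ a b : A, M a b = M b a) (hge : ∀ a b : A, a ≠ b → 2 ≤ M a b)

theorem cox_coe {a b : A} (hab : a ≠ b) {n : ℕ} (h : M a b = n) : cox M hsymm hge a b = n := by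
  simp [cox, hab, h]

theorem cox_ne_zero {a b : A} (hab : a ≠ b) (h : cox M hsymm hge a b ≠ 0) :
    M a b = (cox M hsymm hge a b : ℕ) := by
  simp only [cox, Matrix.of_apply, hab, if_false] at *
  cases hM : M a b with
  | top => rw [hM] at h; simp at h
  | coe n => simp

include hge in
theorem two_le {a b : A} (hab : a ≠ b) {n : ℕ} (h : M a b = n) : 2 ≤ n := by
  have := hge a b hab
  rw [h] at this
  exact_mod_cast this

/-- The Coxeter system attached to `M`. -/
noncomputable abbrev csys := (cox M hsymm hge).toCoxeterSystem

/-- Projection to the Coxeter group. -/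
noncomputable def proj : ArtinTits M →* (cox M hsymm hge).Group :=
  lift (csys hsymm hge).simple (by
    intro a b n hab h
    rw [← cox_coe hsymm hge hab h]
    exact simple_alt_comm _ a b)

@[simp] theorem proj_gen (a : A) : proj hsymm hge (atGen M a) = (csys hsymm hge).simple a :=
  lift_gen _ _ _

/-- Simple elements. -/
def Red (x : ArtinTits M) : Prop := (csys hsymm hge).length (proj hsymm hge x) = deg x

theorem length_le_deg (x : ArtinTits M) :
    (csys hsymm hge).length (proj hsymm hge x) ≤ deg x := by
  induction x using gen_ind with
  | h1 => simp
  | h a x ih =>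
    have := (csys hsymm hge).length_mul_le ((csys hsymm hge).simple a) (proj hsymm hge x)
    rw [(csys hsymm hge).length_simple] at this
    simp only [map_mul, proj_gen, deg_mul, deg_gen]
    omega

variable {hsymm hge}

theorem Red.left {x y : ArtinTits M} (h : Red hsymm hge (x * y)) : Red hsymm hge x := by
  have h1 := length_le_deg hsymm hge x
  have h2 := length_le_deg hsymm hge y
  have h3 := (csys hsymm hge).length_mul_le (proj hsymm hge x) (proj hsymm hge y)
  unfold Red at *
  rw [map_mul, deg_mul] at h
  omega

theorem Red.right {x y : ArtinTits M} (h : Red hsymm hge (x * y)) : Red hsymm hge y := by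
  have h1 := length_le_deg hsymm hge x
  have h2 := length_le_deg hsymm hge y
  have h3 := (csys hsymm hge).length_mul_le (proj hsymm hge x) (proj hsymm hge y)
  unfold Red at *
  rw [map_mul, deg_mul] at h
  omega

theorem red_gen (a : A) : Red hsymm hge (atGen M a) := by
  unfold Red
  rw [proj_gen, deg_gen, CoxeterSystem.length_simple]

theorem red_ext {a b : A} (hab : a ≠ b) {n : ℕ} (hn : M a b = n) {g : ArtinTits M}
    (ha : Red hsymm hge (g * atGen M a)) (hb : Red hsymm hge (g * atGen M b)) :
    Red hsymm hge (g * alt (atGen M a) (atGen M b) n) := by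
  have hg := ha.left
  have hc := cox_coe hsymm hge hab hn
  subst hc
  unfold Red at *
  simp only [map_mul, proj_gen, deg_mul, deg_gen, alt_map, deg_alt] at *
  rw [two_ext _ hab, hg]
  · rw [CoxeterSystem.not_isRightDescent_iff, ha, hg]
  · rw [CoxeterSystem.not_isRightDescent_iff, hb, hg]

theorem red_alt {a b : A} (hab : a ≠ b) {n : ℕ} (hn : M a b = n) :
    Red hsymm hge (alt (atGen M a) (atGen M b) n) := by
  have := red_ext (hsymm := hsymm) (hge := hge) hab hn (g := 1) (by simpa using red_gen a)
    (by simpa using red_gen b)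
  simpa using this

variable (hsymm hge) in
theorem exists_section (v : (cox M hsymm hge).Group) :
    ∃ z : ArtinTits M, proj hsymm hge z = v ∧ deg z = (csys hsymm hge).length v := by
  induction hn : (csys hsymm hge).length v using Nat.strong_induction_on generalizing v with
  | _ n ih =>
    by_cases hv : v = 1
    · subst hv; subst hn
      exact ⟨1, by simp, by simp⟩
    obtain ⟨b, hb⟩ := (csys hsymm hge).exists_leftDescent_of_ne_one hv
    obtain ⟨z, h1, h2⟩ := ih _ (by subst hn; exact hb) ((csys hsymm hge).simple b * v) rfl
    refine ⟨atGen M b * z, ?_, ?_⟩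
    · rw [map_mul, proj_gen, h1, CoxeterSystem.simple_mul_simple_cancel_left]
    · have := (csys hsymm hge).isLeftDescent_iff.mp hb
      rw [deg_mul, deg_gen, h2]; omega

theorem deg_zero {x : ArtinTits M} (h : deg x = 0) : x = 1 := by
  rcases exists_cons x with rfl | ⟨a, y, rfl⟩
  · rfl
  · simp at h

/-- Matsumoto's theorem. -/
theorem matsumoto (x y : ArtinTits M) (hx : Red hsymm hge x) (hy : Red hsymm hge y)
    (h : proj hsymm hge x = proj hsymm hge y) : x = y ∧
    ∀ a b x' y', a ≠ b → x = atGen M a * x' → y = atGen M b * y' →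
      ∃ n : ℕ, M a b = (n + 1 : ℕ) ∧ ∃ w, x' = alt (atGen M b) (atGen M a) n * w ∧
        y' = alt (atGen M a) (atGen M b) n * w := by
  induction hn : deg x using Nat.strong_induction_on generalizing x y with
  | _ n ih =>
    have hdeg : deg y = deg x := by rw [← hx, ← hy, h]
    have part2 : ∀ a b x' y', a ≠ b → x = atGen M a * x' → y = atGen M b * y' →
      ∃ n : ℕ, M a b = (n + 1 : ℕ) ∧ ∃ w, x' = alt (atGen M b) (atGen M a) n * w ∧
        y' = alt (atGen M a) (atGen M b) n * w := by
      rintro a b x' y' hab rfl rfl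
      have hx' := hx.right
      have hy' := hy.right
      have da : (csys hsymm hge).IsLeftDescent (proj hsymm hge (atGen M a * x')) a := by
        unfold CoxeterSystem.IsLeftDescent
        rw [hx, map_mul, proj_gen, CoxeterSystem.simple_mul_simple_cancel_left, hx']
        simp
      have db : (csys hsymm hge).IsLeftDescent (proj hsymm hge (atGen M a * x')) b := by
        unfold CoxeterSystem.IsLeftDescent
        rw [hx, ← hdeg, h, map_mul, proj_gen, CoxeterSystem.simple_mul_simple_cancel_left, hy']
        simp
      obtain ⟨c0, v, e1, e2⟩ := two_desc _ hab _ da db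
      have hM := cox_ne_zero hsymm hge hab c0
      obtain ⟨m, hm⟩ := Nat.exists_eq_succ_of_ne_zero c0
      rw [hm] at hM e1 e2
      refine ⟨m, hM, ?_⟩
      obtain ⟨z, hz1, hz2⟩ := exists_section hsymm hge v
      have e1' := e1
      have hcomm : alt ((csys hsymm hge).simple a) ((csys hsymm hge).simple b) (m + 1) =
          alt ((csys hsymm hge).simple b) ((csys hsymm hge).simple a) (m + 1) := by
        have := simple_alt_comm (csys hsymm hge) a b
        rwa [hm] at this
      rw [map_mul, proj_gen, alt, mul_assoc, mul_left_cancel_iff] at e1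
      rw [Nat.succ_eq_add_one, hcomm, h, map_mul, proj_gen, alt, mul_assoc,
        mul_left_cancel_iff] at e1'
      have p1 : proj hsymm hge (alt (atGen M b) (atGen M a) m * z) = proj hsymm hge x' := by
        rw [e1, map_mul, alt_map, hz1, proj_gen, proj_gen]
      have p2 : proj hsymm hge (alt (atGen M a) (atGen M b) m * z) = proj hsymm hge y' := by
        rw [e1', map_mul, alt_map, hz1, proj_gen, proj_gen]
      rw [hx] at e2
      simp only [deg_mul, deg_gen] at *
      refine ⟨z, ?_, ?_⟩
      · refine (ih (deg x') (by omega) x' _ hx' ?_ p1.symm rfl).1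
        unfold Red
        rw [p1, hx', deg_mul, deg_alt]; omega
      · refine (ih (deg y') (by omega) y' _ hy' ?_ p2.symm rfl).1
        unfold Red
        rw [p2, hy', deg_mul, deg_alt]; omega
    refine ⟨?_, part2⟩
    rcases exists_cons x with rfl | ⟨a, x', rfl⟩
    · rw [deg_zero (x := y)]
      simpa using hdeg
    rcases exists_cons y with rfl | ⟨b, y', rfl⟩
    · exfalso; rw [deg_mul, deg_gen, deg_one] at hdeg; omega
    by_cases hab : a = b
    · subst hab
      congr 1
      refine (ih (deg x') (by simp at hn; omega) x' y' hx.right hy.right ?_ rfl).1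
      simpa using h
    · obtain ⟨n, hM, w, rfl, rfl⟩ := part2 a b x' y' hab rfl rfl
      rw [← mul_assoc, ← mul_assoc]
      congr 1
      exact braid hab hM

/-- The conclusion of the reduction lemma. -/
def Rel (M : A → A → ℕ∞) (a : A) (x : ArtinTits M) (b : A) (y : ArtinTits M) : Prop :=
  (a = b ∧ x = y) ∨ (a ≠ b ∧ ∃ n : ℕ, M a b = (n + 1 : ℕ) ∧
    ∃ w, x = alt (atGen M b) (atGen M a) n * w ∧ y = alt (atGen M a) (atGen M b) n * w)

def RL (M : A → A → ℕ∞) (N : ℕ) : Prop :=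
  ∀ a b (x y : ArtinTits M), deg (atGen M a * x) ≤ N → atGen M a * x = atGen M b * y →
    Rel M a x b y

theorem cancel {N : ℕ} (hRL : RL M N) (p u v : ArtinTits M) (hd : deg (p * u) ≤ N)
    (h : p * u = p * v) : u = v := by
  induction p using gen_ind with
  | h1 => simpa using h
  | h a x ih =>
    rw [mul_assoc] at h hd
    rw [mul_assoc] at h
    rcases hRL a a _ _ hd h with h1 | h1
    · exact ih (by simp at *; omega) h1.2
    · exact absurd rfl h1.1

/-- Factor-closed submonoids. -/
def FC (N : Submonoid (ArtinTits M)) : Prop := ∀ x y, x * y ∈ N → x ∈ N ∧ y ∈ N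

theorem alt_mem {G : Type*} [Monoid G] (S : Submonoid G) {x y : G} (hx : x ∈ S) (hy : y ∈ S)
    (n : ℕ) : alt x y n ∈ S := by
  induction n generalizing x y with
  | zero => exact S.one_mem
  | succ n ih => exact S.mul_mem hx (ih hy hx)

variable (hsymm hge) in
theorem lcm_lemma {N : ℕ} (hRL : RL M N) (p q u v : ArtinTits M) (hd : deg (p * u) ≤ N)
    (h : p * u = q * v) : ∃ r s w, p * r = q * s ∧ u = r * w ∧ v = s * w ∧
      (∀ g, Red hsymm hge (g * p) → Red hsymm hge (g * q) → Red hsymm hge (g * (p * r))) ∧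
      (∀ S : Submonoid (ArtinTits M), FC S → p ∈ S → q ∈ S → r ∈ S ∧ s ∈ S) := by
  induction hn : deg (p * u) using Nat.strong_induction_on generalizing p q u v with
  | _ n ih =>
    rcases exists_cons p with rfl | ⟨a, p', rfl⟩
    · exact ⟨q, 1, v, by simp, by simpa using h, by simp, fun g _ h2 => by simpa using h2,
        fun S _ _ hq => ⟨hq, S.one_mem⟩⟩
    rcases exists_cons q with rfl | ⟨b, q', rfl⟩
    · exact ⟨1, atGen M a * p', u, by simp, by simp, by simpa using h.symm,
        fun g h1 _ => by simpa using h1, fun S _ hp _ => ⟨S.one_mem, hp⟩⟩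
    have hdeq := congrArg deg h
    simp only [mul_assoc] at h
    have hrel := hRL a b _ _ (by simpa only [mul_assoc] using hd) h
    simp only [deg_mul, deg_gen] at hd hn hdeq
    rcases hrel with ⟨rfl, h1⟩ | ⟨hab, m, hM, w, h1, h2⟩
    · obtain ⟨r, s, w, e1, e2, e3, e4, e5⟩ := ih (deg (p' * u)) (by simp; omega) p' q' u v
        (by simp; omega) h1 rfl
      refine ⟨r, s, w, by rw [mul_assoc, mul_assoc, e1], e2, e3, ?_, ?_⟩
      · intro g g1 g2
        have := e4 (g * atGen M a) (by rwa [mul_assoc]) (by rwa [mul_assoc])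
        simpa only [mul_assoc] using this
      · intro S hS hp hq
        exact e5 S hS (hS _ _ hp).2 (hS _ _ hq).2
    · have d1 := congrArg deg h1
      have d2 := congrArg deg h2
      simp only [deg_mul, deg_alt] at d1 d2
      obtain ⟨r1, s1, w1, a1, a2, a3, a4, a5⟩ := ih (deg (p' * u)) (by simp; omega) p'
        (alt (atGen M b) (atGen M a) m) u w (by simp; omega) h1 rfl
      obtain ⟨r2, s2, w2, b1, b2, b3, b4, b5⟩ := ih (deg (q' * v)) (by simp; omega) q'
        (alt (atGen M a) (atGen M b) m) v w (by simp; omega) h2 rfl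
      have d3 := congrArg deg a3
      simp only [deg_mul] at d3
      obtain ⟨r3, s3, w3, c1, c2, c3, c4, c5⟩ := ih (deg (s1 * w1)) (by simp; omega) s1 s2 w1 w2
        (by simp; omega) (a3 ▸ b3) rfl
      have hbr := braid hab hM
      rw [alt, alt] at hbr
      have hcomm : atGen M a * p' * (r1 * r3) = atGen M b * q' * (r2 * s3) := by
        calc atGen M a * p' * (r1 * r3) = atGen M a * (p' * r1) * r3 := by simp only [mul_assoc]
          _ = (atGen M a * alt (atGen M b) (atGen M a) m) * (s1 * r3) := by
            rw [a1]; simp only [mul_assoc]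
          _ = (atGen M b * alt (atGen M a) (atGen M b) m) * (s2 * s3) := by rw [hbr, c1]
          _ = atGen M b * (q' * r2) * s3 := by rw [b1]; simp only [mul_assoc]
          _ = _ := by simp only [mul_assoc]
      refine ⟨r1 * r3, r2 * s3, w3, hcomm, by rw [a2, c2, mul_assoc], by rw [b2, c3, mul_assoc],
        ?_, ?_⟩
      · intro g g1 g2
        rw [← mul_assoc] at g1 g2
        have hΔ := red_ext hab hM g1.left g2.left
        have hΔ' := hΔ
        rw [alt, ← mul_assoc] at hΔ
        rw [braid hab hM, alt, ← mul_assoc] at hΔ'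
        have f1 := a4 _ g1 hΔ
        have f2 := b4 _ g2 hΔ'
        rw [a1, ← mul_assoc] at f1
        rw [b1, ← mul_assoc] at f2
        rw [mul_assoc g, ← hbr, ← mul_assoc g] at f2
        have f3 := c4 _ f1 f2
        have : g * (atGen M a * p' * (r1 * r3)) =
            g * atGen M a * alt (atGen M b) (atGen M a) m * (s1 * r3) := by
          calc _ = g * atGen M a * (p' * r1) * r3 := by simp only [mul_assoc]
            _ = _ := by rw [a1]; simp only [mul_assoc]
        rwa [this]
      · intro S hS hp hq
        have ha := hS _ _ hp
        have hb := hS _ _ hq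
        have k1 := a5 S hS ha.2 (alt_mem S hb.1 ha.1 m)
        have k2 := b5 S hS hb.2 (alt_mem S ha.1 hb.1 m)
        have k3 := c5 S hS k1.2 k2.2
        exact ⟨S.mul_mem k1.1 k3.1, S.mul_mem k2.1 k3.2⟩

variable (hsymm hge) in
include hsymm hge in
theorem rel_trans {N : ℕ} (hRL : RL M N) {a b c : A} {x y z : ArtinTits M}
    (hd : deg z ≤ N) (h1 : Rel M a x c z) (h2 : Rel M c z b y) : Rel M a x b y := by
  rcases h1 with ⟨rfl, rfl⟩ | ⟨hac, m, hm, w, rfl, h1⟩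
  · exact h2
  rcases h2 with ⟨rfl, rfl⟩ | ⟨hcb, m', hm', w', h2, rfl⟩
  · exact Or.inr ⟨hac, m, hm, w, rfl, h1⟩
  by_cases hab : a = b
  · subst hab
    left
    refine ⟨rfl, ?_⟩
    rw [hsymm c a, hm] at hm'
    have : m = m' := by
      have : m + 1 = m' + 1 := by exact_mod_cast hm'
      omega
    subst this
    congr 1
    exact cancel hRL _ _ _ (h1 ▸ hd) (h1.symm.trans h2)
  right
  refine ⟨hab, ?_⟩
  obtain ⟨r, s, w'', e1, rfl, rfl, e4, -⟩ := lcm_lemma hsymm hge hRL _ _ w w' (h1 ▸ hd)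
    (h1.symm.trans h2)
  have hca : M c a = (m + 1 : ℕ) := by rw [hsymm c a, hm]
  have b1 := braid hac hm
  have b2 := braid hcb hm'
  rw [alt, alt] at b1 b2
  have hred := e4 (atGen M c) (red_alt hac.symm hca) (red_alt hcb hm')
  have eq1 : atGen M c * (alt (atGen M a) (atGen M c) m * r) =
      atGen M a * (alt (atGen M c) (atGen M a) m * r) := by
    rw [← mul_assoc, ← b1, mul_assoc]
  have eq2 : atGen M c * (alt (atGen M a) (atGen M c) m * r) =
      atGen M b * (alt (atGen M c) (atGen M b) m' * s) := by
    rw [e1, ← mul_assoc, b2, mul_assoc]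
  obtain ⟨n, hn, z, z1, z2⟩ := (matsumoto _ _ hred hred rfl).2 a b _ _ hab eq1 eq2
  refine ⟨n, hn, z * w'', ?_, ?_⟩
  · rw [← mul_assoc, z1, mul_assoc]
  · rw [← mul_assoc, z2, mul_assoc]

theorem Rel.symm' (hsymm : ∀ a b : A, M a b = M b a) {a b : A} {x y : ArtinTits M}
    (h : Rel M a x b y) : Rel M b y a x := by
  rcases h with ⟨rfl, rfl⟩ | ⟨hab, m, hm, w, h1, h2⟩
  · exact Or.inl ⟨rfl, rfl⟩
  · exact Or.inr ⟨hab.symm, m, by rw [hsymm, hm], w, h2, h1⟩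

theorem Rel.mul {a b : A} {x y : ArtinTits M} (h : Rel M a x b y) (z : ArtinTits M) :
    Rel M a (x * z) b (y * z) := by
  rcases h with ⟨rfl, rfl⟩ | ⟨hab, m, hm, w, rfl, rfl⟩
  · exact Or.inl ⟨rfl, rfl⟩
  · exact Or.inr ⟨hab, m, hm, w * z, by rw [mul_assoc], by rw [mul_assoc]⟩

/-- Word-level form of the reduction lemma. -/
def WRel (M : A → A → ℕ∞) (x y : FreeMonoid A) : Prop :=
  (x = 1 ∧ y = 1) ∨ ∃ a b x' y', x = FreeMonoid.of a * x' ∧ y = FreeMonoid.of b * y' ∧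
    Rel M a ((artinCon M).mk' x') b ((artinCon M).mk' y')

theorem of_mul_inj {a b : A} {x y : FreeMonoid A}
    (h : FreeMonoid.of a * x = FreeMonoid.of b * y) : a = b ∧ x = y := by
  have := congrArg FreeMonoid.toList h
  simpa using this

theorem of_mul_ne {a : A} {x : FreeMonoid A} : FreeMonoid.of a * x ≠ 1 := by
  intro h
  have := congrArg FreeMonoid.toList h
  simp at this

variable (hsymm hge) in
include hsymm hge in
theorem wrel_of {N : ℕ} (hRL : RL M N) (x y : FreeMonoid A) (h : ConGen.Rel (artinRel M) x y)
    (hd : deg ((artinCon M).mk' x) ≤ N + 1) : WRel M x y := by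
  have tomk : ∀ {x y : FreeMonoid A}, ConGen.Rel (artinRel M) x y →
      (artinCon M).mk' x = (artinCon M).mk' y := fun h => (Con.eq _).mpr h
  have mkof : ∀ a (x : FreeMonoid A), (artinCon M).mk' (FreeMonoid.of a * x) =
      atGen M a * (artinCon M).mk' x := fun a x => by rw [map_mul]; rfl
  induction h with
  | of x y h =>
    obtain ⟨a, b, n, hab, hn, rfl, rfl⟩ := h
    have h2 := two_le hge hab hn
    obtain ⟨m, rfl⟩ : ∃ m, n = m + 1 := ⟨n - 1, by omega⟩
    right
    refine ⟨a, b, altWord b a m, altWord a b m, ?_, ?_, Or.inr ⟨hab, m, hn, 1, ?_, ?_⟩⟩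
    · rw [altWord_eq, altWord_eq, alt]
    · rw [altWord_eq, altWord_eq, alt]
    · rw [mk_altWord, mul_one]
    · rw [mk_altWord, mul_one]
  | refl x =>
    induction x using FreeMonoid.casesOn with
    | one => exact Or.inl ⟨rfl, rfl⟩
    | of_mul a l => exact Or.inr ⟨a, a, l, l, rfl, rfl, Or.inl ⟨rfl, rfl⟩⟩
  | symm h ih =>
    rcases ih (by rwa [tomk h]) with ⟨h1, h2⟩ | ⟨a, b, x', y', h1, h2, h3⟩
    · exact Or.inl ⟨h2, h1⟩
    · exact Or.inr ⟨b, a, y', x', h2, h1, h3.symm' hsymm⟩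
  | trans h1 h2 ih1 ih2 =>
    have hd2 := hd
    rw [tomk h1] at hd2
    rcases ih1 hd with ⟨rfl, rfl⟩ | ⟨a, c, x', z', rfl, rfl, e⟩
    · exact ih2 hd2
    rcases ih2 hd2 with ⟨h3, rfl⟩ | ⟨c', b, z'', y', h3, rfl, e'⟩
    · exact absurd h3 of_mul_ne
    obtain ⟨rfl, rfl⟩ := of_mul_inj h3
    rw [mkof, deg_mul, deg_gen] at hd2
    exact Or.inr ⟨a, b, x', y', rfl, rfl, rel_trans hsymm hge hRL (by omega) e e'⟩
  | mul h1 h2 ih1 ih2 =>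
    rw [map_mul, deg_mul] at hd
    rcases ih1 (by omega) with ⟨rfl, rfl⟩ | ⟨a, b, x', y', rfl, rfl, e⟩
    · rw [one_mul, one_mul]; exact ih2 (by omega)
    · refine Or.inr ⟨a, b, x' * _, y' * _, mul_assoc _ _ _, mul_assoc _ _ _, ?_⟩
      rw [map_mul, map_mul, tomk h2]
      exact e.mul _

include hsymm hge in
theorem rl (N : ℕ) : RL M N := by
  induction N with
  | zero =>
    intro a b x y hd
    simp at hd
  | succ N ih =>
    intro a b x y hd h
    obtain ⟨u, rfl⟩ := mk_surj x
    obtain ⟨v, rfl⟩ := mk_surj y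
    have mkof : ∀ a (x : FreeMonoid A), (artinCon M).mk' (FreeMonoid.of a * x) =
      atGen M a * (artinCon M).mk' x := fun a x => by rw [map_mul]; rfl
    rw [← mkof] at h hd
    rw [← mkof] at h
    rcases wrel_of hsymm hge ih _ _ ((Con.eq _).mp h) hd with ⟨h1, -⟩ | ⟨a', b', x', y', h1, h2, h3⟩
    · exact absurd h1 of_mul_ne
    · obtain ⟨rfl, rfl⟩ := of_mul_inj h1
      obtain ⟨rfl, rfl⟩ := of_mul_inj h2
      exact h3

include hsymm hge in
/-- Common multiples inside factor-closed submonoids. -/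
theorem common_multiple (S : Submonoid (ArtinTits M)) (hS : FC S) {p q u v : ArtinTits M}
    (hp : p ∈ S) (hq : q ∈ S) (h : p * u = q * v) :
    ∃ r ∈ S, ∃ s ∈ S, ∃ w, p * r = q * s ∧ u = r * w ∧ v = s * w := by
  obtain ⟨r, s, w, h1, h2, h3, -, h5⟩ :=
    lcm_lemma hsymm hge (rl (hsymm := hsymm) (hge := hge) (deg (p * u))) p q u v le_rfl h
  obtain ⟨hr, hs⟩ := h5 S hS hp hq
  exact ⟨r, hr, s, hs, w, h1, h2, h3⟩

/-! ### The retraction -/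

theorem alt_zero_of {G : Type*} [MonoidWithZero G] {x y : G} (h : x = 0 ∨ y = 0) {n : ℕ}
    (hn : 2 ≤ n) : alt x y n = 0 := by
  obtain ⟨m, rfl⟩ : ∃ m, n = m + 1 + 1 := ⟨n - 2, by omega⟩
  rw [alt, alt]
  rcases h with rfl | rfl <;> simp

open Classical in
include hsymm hge in
/-- Retraction onto the parabolic monoid with zero. -/
theorem exists_retract (F : Set A) :
    ∃ ψ : ArtinTits M →* WithZero (ArtinTits (fun u v : F => M u.val v.val)),
      (∀ f : F, ψ (atGen M f.val) = (atGen (fun u v : F => M u.val v.val) f :)) ∧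
      ∀ a, a ∉ F → ψ (atGen M a) = 0 := by
  refine ⟨lift (fun a => if h : a ∈ F then
    ((atGen (fun u v : F => M u.val v.val) ⟨a, h⟩ : ArtinTits _) : WithZero _) else 0) ?_, ?_, ?_⟩
  · intro a b n hab hn
    have h2 := two_le hge hab hn
    by_cases ha : a ∈ F
    · by_cases hb : b ∈ F
      · simp only [ha, hb, dif_pos]
        have := braid (M := fun u v : F => M u.val v.val) (a := ⟨a, ha⟩) (b := ⟨b, hb⟩) (n := n)
          (by simpa using hab) hn
        have := congrArg (WithZero.coeMonoidHom) this
        rw [alt_map, alt_map] at this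
        exact this
      · rw [alt_zero_of (Or.inr (by simp [hb])) h2, alt_zero_of (Or.inl (by simp [hb])) h2]
    · rw [alt_zero_of (Or.inl (by simp [ha])) h2, alt_zero_of (Or.inr (by simp [ha])) h2]
  · intro f; rw [lift_gen]; simp
  · intro a ha; rw [lift_gen]; simp [ha]

/-- The inclusion of the parabolic monoid. -/
noncomputable def incl (M : A → A → ℕ∞) (F : Set A) :
    ArtinTits (fun u v : F => M u.val v.val) →* ArtinTits M :=
  lift (fun f => atGen M f.val) (by
    intro a b n hab h
    exact braid (fun hh => hab (Subtype.ext hh)) h)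

theorem incl_gen (F : Set A) (f : F) :
    incl M F (atGen (fun u v : F => M u.val v.val) f) = atGen M f.val := lift_gen _ _ _

theorem gen_mem (F : Set A) {a : A} (h : a ∈ F) : atGen M a ∈ atParab M F :=
  Submonoid.subset_closure ⟨a, h, rfl⟩

theorem mrange_incl (F : Set A) : MonoidHom.mrange (incl M F) = atParab M F := by
  apply le_antisymm
  · rintro _ ⟨x, rfl⟩
    induction x using gen_ind with
    | h1 => rw [map_one]; exact Submonoid.one_mem _
    | h f x ih =>
      rw [map_mul, incl_gen]
      exact Submonoid.mul_mem _ (gen_mem F f.2) ih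
  · refine Submonoid.closure_le.mpr ?_
    rintro _ ⟨a, ha, rfl⟩
    exact ⟨_, incl_gen F ⟨a, ha⟩⟩

include hsymm hge in
theorem incl_inj_fc (F : Set A) : Function.Injective (incl M F) ∧ FC (atParab M F) := by
  obtain ⟨ψ, h1, h2⟩ := exists_retract (hsymm := hsymm) (hge := hge) F
  have hψ : ∀ x, ψ (incl M F x) = (x : WithZero _) := by
    intro x
    induction x using gen_ind with
    | h1 => simp
    | h f x ih => rw [map_mul, map_mul, ih, incl_gen, h1, WithZero.coe_mul]
  have hmem : ∀ x, ψ x ≠ 0 → x ∈ atParab M F := by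
    intro x
    induction x using gen_ind with
    | h1 => intro _; exact Submonoid.one_mem _
    | h a x ih =>
      intro h
      rw [map_mul] at h
      have ha : a ∈ F := by
        by_contra hc
        rw [h2 a hc, zero_mul] at h
        exact h rfl
      exact Submonoid.mul_mem _ (gen_mem F ha) (ih (right_ne_zero_of_mul h))
  refine ⟨fun x y h => ?_, fun x y h => ?_⟩
  · have := congrArg ψ h
    rw [hψ, hψ] at this
    exact WithZero.coe_inj.mp this
  · rw [← mrange_incl] at h
    obtain ⟨z, hz⟩ := h
    have : ψ (x * y) ≠ 0 := by
      rw [← hz, hψ]; exact WithZero.coe_ne_zero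
    rw [map_mul] at this
    exact ⟨hmem x (left_ne_zero_of_mul this), hmem y (right_ne_zero_of_mul this)⟩

end Monoid

end ATProof

/-- Let `P` be an Artin–Tits monoid on the atom set `A` and `F ⊆ A`.  Then:
(1) the submonoid `P_F = ⟨F⟩⁺` is canonically isomorphic to the Artin–Tits monoid on `F`
with the restricted Coxeter matrix;
(2) for `p, q ∈ P_F`, if `pP ∩ qP ≠ ∅` in `P` then `pP_F ∩ qP_F ≠ ∅` in `P_F`;
(3) least common multiples of elements of `P_F` computed in `P_F` agree with those
computed in `P`. -/
theorem parabolic_submonoid {A : Type*} (M : A → A → ℕ∞)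
    (hsymm : ∀ a b : A, M a b = M b a)
    (hge : ∀ a b : A, a ≠ b → 2 ≤ M a b)
    (F : Set A) :
    (∃ φ : ArtinTits (fun u v : F => M u.val v.val) ≃* atParab M F,
      ∀ f : F, ((φ (atGen (fun u v : F => M u.val v.val) f) : atParab M F) : ArtinTits M)
        = atGen M f.val) ∧
    (∀ p ∈ atParab M F, ∀ q ∈ atParab M F,
      (∃ u v : ArtinTits M, p * u = q * v) →
        ∃ u ∈ atParab M F, ∃ v ∈ atParab M F, p * u = q * v) ∧
    (∀ p ∈ atParab M F, ∀ q ∈ atParab M F, ∀ c ∈ atParab M F,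
      (IsLcmIn M (atParab M F) p q c ↔ IsLcmIn M ⊤ p q c)) := by
  obtain ⟨hinj, hFC⟩ := ATProof.incl_inj_fc (hsymm := hsymm) (hge := hge) F
  refine ⟨?_, ?_, ?_⟩
  · refine ⟨MulEquiv.ofBijective (MonoidHom.codRestrict (ATProof.incl M F) (atParab M F)
      (fun x => ATProof.mrange_incl (M := M) F ▸ ⟨x, rfl⟩)) ⟨?_, ?_⟩, ?_⟩
    · intro x y h
      exact hinj (congrArg Subtype.val h)
    · rintro ⟨y, hy⟩
      have hy' := hy
      rw [← ATProof.mrange_incl] at hy'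
      obtain ⟨x, rfl⟩ := hy'
      exact ⟨x, rfl⟩
    intro f
    exact ATProof.incl_gen F f
  · rintro p hp q hq ⟨u, v, h⟩
    obtain ⟨r, hr, s, hs, w, h1, -, -⟩ :=
      ATProof.common_multiple (hsymm := hsymm) (hge := hge) _ hFC hp hq h
    exact ⟨r, hr, s, hs, h1⟩
  · intro p hp q hq c hc
    constructor
    · rintro ⟨⟨r, hr, h1⟩, ⟨s, hs, h2⟩, h3⟩
      refine ⟨⟨r, trivial, h1⟩, ⟨s, trivial, h2⟩, ?_⟩
      rintro d ⟨u, -, hu⟩ ⟨v, -, hv⟩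
      obtain ⟨r', hr', s', hs', w, e1, e2, e3⟩ :=
        ATProof.common_multiple (hsymm := hsymm) (hge := hge) _ hFC hp hq (hu.trans hv.symm)
      obtain ⟨t, ht, ht'⟩ := h3 (p * r') ⟨r', hr', rfl⟩ ⟨s', hs', e1.symm⟩
      refine ⟨t * w, trivial, ?_⟩
      rw [← mul_assoc, ht', mul_assoc, ← e2, hu]
    · rintro ⟨⟨r, -, h1⟩, ⟨s, -, h2⟩, h3⟩
      refine ⟨⟨r, (hFC p r (h1 ▸ hc)).2, h1⟩, ⟨s, (hFC q s (h2 ▸ hc)).2, h2⟩, ?_⟩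
      rintro d ⟨u, hu, hu'⟩ ⟨v, hv, hv'⟩
      obtain ⟨t, -, ht⟩ := h3 d ⟨u, trivial, hu'⟩ ⟨v, trivial, hv'⟩
      refine ⟨t, (hFC c t ?_).2, ht⟩
      rw [ht, ← hu']
      exact Submonoid.mul_mem _ hp hu
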